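/- Let K be a nonzero finite-dimensional graded F₂[t]-module (t in degree 1) and K₀ a finite-dimensional graded F₂-vector space such that for every degree n there is an isomorphism K₀ⁿ ≅ (K/tK)ⁿ ⊕ (ker(t·|K))ⁿ. If K₀ is bi-connected (K₀⁰ ≅ F₂ and K₀^{‖K₀‖} ≅ F₂), then K is bi-connected and ‖K‖ = ‖K₀‖. -/

import Mathlib

open Module

/-- A nonnegatively graded `F₂[t]`-module with `t` in degree 1, presented as a sequence of
`F₂`-vector spaces together with the action of `t` as degree `+1` linear maps. -/
structure GradedFMod where
  V : ℕ → Type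
  [acg : ∀ i, AddCommGroup (V i)]
  [mod : ∀ i, Module (ZMod 2) (V i)]
  t : ∀ i, V i →ₗ[ZMod 2] V (i + 1)

attribute [instance] GradedFMod.acg GradedFMod.mod

namespace GradedFMod

/-- `M` is finite dimensional over `F₂` (degreewise finite and bounded above). -/
def IsFin (M : GradedFMod) : Prop :=
  (∀ i, FiniteDimensional (ZMod 2) (M.V i)) ∧ ∃ N, ∀ i, N ≤ i → ∀ x : M.V i, x = 0

/-- `M` is nonzero. -/
def Nontriv (M : GradedFMod) : Prop := ∃ i, ∃ x : M.V i, x ≠ 0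

/-- The degree `i` part of the submodule `t·M`. -/
def tRange (M : GradedFMod) : ∀ i, Submodule (ZMod 2) (M.V i)
  | 0 => ⊥
  | (i + 1) => LinearMap.range (M.t i)

/-- `dim_{F₂} (M/tM)ⁱ`. -/
noncomputable def coinvDim (M : GradedFMod) (i : ℕ) : ℕ :=
  finrank (ZMod 2) (M.V i ⧸ M.tRange i)

/-- `dim_{F₂} (ker (t·|M))ⁱ`. -/
noncomputable def kerDim (M : GradedFMod) (i : ℕ) : ℕ :=
  finrank (ZMod 2) (LinearMap.ker (M.t i))

/-- Total `F₂`-dimension of `M`. -/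
noncomputable def totalDim (M : GradedFMod) : ℕ := ∑ᶠ i, finrank (ZMod 2) (M.V i)

/-- Total `F₂`-dimension of `M/tM`. -/
noncomputable def totalCoinvDim (M : GradedFMod) : ℕ := ∑ᶠ i, M.coinvDim i

/-- Total `F₂`-dimension of `ker(t·|M)`. -/
noncomputable def totalKerDim (M : GradedFMod) : ℕ := ∑ᶠ i, M.kerDim i

/-- The norm `‖M‖`: the top degree in which `M` is nonzero. -/
noncomputable def norm (M : GradedFMod) : ℕ := sSup {k | ∃ x : M.V k, x ≠ 0}

end GradedFMod

/-- If in every degree n there is an isomorphism K0^n ≃ (K/tK)^n ⊕ (ker(t | K))^n and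
K0 is bi-connected, then the nonzero finite graded F2[t]-module K is bi-connected
with norm K = norm K0. -/
theorem biconnected_of_gysin (K : GradedFMod) (hfin : K.IsFin) (hnz : K.Nontriv)
    (K₀ : ℕ → Type) [∀ i, AddCommGroup (K₀ i)] [∀ i, Module (ZMod 2) (K₀ i)]
    (hK₀fin : ∀ i, FiniteDimensional (ZMod 2) (K₀ i))
    (hK₀bd : ∃ N, ∀ i, N ≤ i → ∀ x : K₀ i, x = 0)
    (hses : ∀ n, finrank (ZMod 2) (K₀ n) = K.coinvDim n + K.kerDim n)
    (hK₀conn : finrank (ZMod 2) (K₀ 0) = 1)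
    (hK₀top : finrank (ZMod 2) (K₀ (sSup {k | ∃ x : K₀ k, x ≠ 0})) = 1) :
    finrank (ZMod 2) (K.V 0) = 1 ∧ finrank (ZMod 2) (K.V K.norm) = 1 ∧
      K.norm = sSup {k | ∃ x : K₀ k, x ≠ 0} := by
  obtain ⟨hfd, N, hN⟩ := hfin
  have hpos : ∀ n, (∃ x : K.V n, x ≠ 0) ↔ 0 < finrank (ZMod 2) (K.V n) := by
    intro n
    have := hfd n
    rw [Module.finrank_pos_iff_exists_ne_zero]
  have hpos₀ : ∀ n, (∃ x : K₀ n, x ≠ 0) ↔ 0 < finrank (ZMod 2) (K₀ n) := by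
    intro n
    have := hK₀fin n
    rw [Module.finrank_pos_iff_exists_ne_zero]
  have hker_le : ∀ n, K.kerDim n ≤ finrank (ZMod 2) (K.V n) := by
    intro n
    have := hfd n
    exact Submodule.finrank_le _
  have hco_le : ∀ n, K.coinvDim n ≤ finrank (ZMod 2) (K.V n) := by
    intro n
    have := hfd n
    exact Submodule.finrank_quotient_le _
  have hco0 : K.coinvDim 0 = finrank (ZMod 2) (K.V 0) := by
    have := hfd 0
    have h := Submodule.finrank_quotient_add_finrank (K.tRange 0)
    have h2 : finrank (ZMod 2) (K.tRange 0) = 0 := by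
      exact finrank_bot (ZMod 2) (K.V 0)
    unfold GradedFMod.coinvDim
    omega
  have hbdd : BddAbove {k | ∃ x : K.V k, x ≠ 0} := by
    refine ⟨N, ?_⟩
    rintro k ⟨x, hx⟩
    by_contra h
    exact hx (hN k (by omega) x)
  have hmem : K.norm ∈ {k | ∃ x : K.V k, x ≠ 0} := Nat.sSup_mem hnz hbdd
  have habove : ∀ n, K.norm < n → finrank (ZMod 2) (K.V n) = 0 := by
    intro n hn
    by_contra h
    have : n ≤ K.norm := le_csSup hbdd ((hpos n).2 (by omega))
    omega
  have hkertop : K.kerDim K.norm = finrank (ZMod 2) (K.V K.norm) := by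
    have := hfd K.norm
    have := hfd (K.norm + 1)
    have h := LinearMap.finrank_range_add_finrank_ker (K.t K.norm)
    have h2 := Submodule.finrank_le (LinearMap.range (K.t K.norm))
    have h3 := habove (K.norm + 1) (by omega)
    unfold GradedFMod.kerDim
    omega
  have htop := (hpos _).1 hmem
  have hnorm : K.norm = sSup {k | ∃ x : K₀ k, x ≠ 0} := by
    symm
    apply IsGreatest.csSup_eq
    refine ⟨(hpos₀ _).2 ?_, ?_⟩
    · have := hses K.norm
      omega
    · intro k hk
      have h1 := (hpos₀ k).1 hk
      by_contra h
      have h2 := habove k (by omega)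
      have h3 := hses k
      have h4 := hker_le k
      have h5 := hco_le k
      omega
  rw [← hnorm] at hK₀top
  refine ⟨?_, ?_, hnorm⟩
  · have h1 := hses 0
    have h2 := hker_le 0
    omega
  · have h1 := hses K.norm
    omega
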